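/- Let q > 0 be a real number and let x₁, x₂ be real numbers with x₁ > 2√q, x₂ > 2√q and x₁ ≠ x₂. Then the convergent double series identity holds: ∑_{n₁=0}^∞ ∑_{n₂=0}^∞ q^{n₁+n₂+1}·(2n₁+1)!·(2n₂+1)! / ((n₁+n₂+1)·(n₁!)²·(n₂!)²) · x₁^{−2n₁−2}·x₂^{−2n₂−2} + ∑_{n₁=1}^∞ ∑_{n₂=1}^∞ q^{n₁+n₂}·n₁·n₂·(2n₁)!·(2n₂)! / ((n₁+n₂)·(n₁!)²·(n₂!)²) · x₁^{−2n₁−1}·x₂^{−2n₂−1} = W₀₂(x₁,x₂;q). -/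

import Mathlib

/-- The genus-zero two-point function of the stationary GW theory of ℙ¹. -/
noncomputable def W02 (q x₁ x₂ : ℝ) : ℝ :=
  (x₁ * x₂ - 4 * q) /
      (2 * Real.sqrt (x₁ ^ 2 - 4 * q) * Real.sqrt (x₂ ^ 2 - 4 * q) * (x₁ - x₂) ^ 2) -
    1 / (2 * (x₁ - x₂) ^ 2)

/-- The even part of the genus-zero two-point series, indexed by `(n₁, n₂) ∈ ℕ × ℕ`. -/
noncomputable def evenTerm (q x₁ x₂ : ℝ) (p : ℕ × ℕ) : ℝ :=
  q ^ (p.1 + p.2 + 1) * (Nat.factorial (2 * p.1 + 1) : ℝ) * (Nat.factorial (2 * p.2 + 1) : ℝ) /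
    (((p.1 + p.2 + 1 : ℕ) : ℝ) * ((Nat.factorial p.1 : ℝ)) ^ 2 * ((Nat.factorial p.2 : ℝ)) ^ 2) /
    (x₁ ^ (2 * p.1 + 2) * x₂ ^ (2 * p.2 + 2))

/-- The odd part of the genus-zero two-point series; the summation over `n₁, n₂ ≥ 1`
is written by reindexing `nᵢ = pᵢ + 1` over `(p₁, p₂) ∈ ℕ × ℕ`. -/
noncomputable def oddTerm (q x₁ x₂ : ℝ) (p : ℕ × ℕ) : ℝ :=
  q ^ ((p.1 + 1) + (p.2 + 1)) * ((p.1 + 1 : ℕ) : ℝ) * ((p.2 + 1 : ℕ) : ℝ) *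
      (Nat.factorial (2 * (p.1 + 1)) : ℝ) * (Nat.factorial (2 * (p.2 + 1)) : ℝ) /
    ((((p.1 + 1) + (p.2 + 1) : ℕ) : ℝ) * ((Nat.factorial (p.1 + 1) : ℝ)) ^ 2 *
      ((Nat.factorial (p.2 + 1) : ℝ)) ^ 2) /
    (x₁ ^ (2 * (p.1 + 1) + 1) * x₂ ^ (2 * (p.2 + 1) + 1))

/-- The coefficient `(2n+1) * binom(2n,n)`. -/
noncomputable def cf (n : ℕ) : ℝ := (2 * n + 1) * (Nat.centralBinom n : ℝ)

lemma cf_nonneg (n : ℕ) : 0 ≤ cf n := by unfold cf; positivity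

lemma cf_succ (n : ℕ) : ((n : ℝ) + 1) * cf (n + 1) = (4 * n + 6) * cf n := by
  have h := Nat.succ_mul_centralBinom_succ n
  have h' : ((n : ℝ) + 1) * (Nat.centralBinom (n + 1) : ℝ)
      = 2 * (2 * n + 1) * (Nat.centralBinom n : ℝ) := by exact_mod_cast h
  unfold cf
  push_cast
  linear_combination (2 * (n : ℝ) + 3) * h'

lemma fact_odd (n : ℕ) : (Nat.factorial (2 * n + 1) : ℝ) = cf n * (Nat.factorial n : ℝ) ^ 2 := by
  have h := Nat.choose_mul_factorial_mul_factorial (show n ≤ 2 * n by omega)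
  rw [show 2 * n - n = n by omega] at h
  have h' : (Nat.centralBinom n : ℝ) * (Nat.factorial n) * (Nat.factorial n)
      = (Nat.factorial (2 * n) : ℝ) := by
    rw [Nat.centralBinom_eq_two_mul_choose]; exact_mod_cast h
  rw [Nat.factorial_succ]
  push_cast
  rw [← h', cf]; ring

lemma fact_even (n : ℕ) : ((n : ℝ) + 1) * (Nat.factorial (2 * (n + 1)) : ℝ)
    = 2 * cf n * (Nat.factorial (n + 1) : ℝ) ^ 2 := by
  rw [show 2 * (n + 1) = (2 * n + 1) + 1 by ring, Nat.factorial_succ (2 * n + 1),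
    Nat.factorial_succ n]
  push_cast
  rw [fact_odd]; ring

lemma choose_eq (n : ℕ) : Ring.choose (-(3 / 2) : ℝ) n * (-4) ^ n = cf n := by
  have key : ∀ n : ℕ, (descPochhammer ℤ n).smeval (-(3 / 2) : ℝ) * (-4) ^ n
      = (Nat.factorial n : ℝ) * cf n := by
    intro n
    induction n with
    | zero => simp [cf]
    | succ n ih =>
      rw [descPochhammer_succ_right, Polynomial.smeval_mul, Polynomial.smeval_sub,
        Polynomial.smeval_X, Polynomial.smeval_natCast, Nat.factorial_succ]
      push_cast
      have := cf_succ n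
      simp only [pow_one, pow_zero, nsmul_eq_mul, mul_one]
      rw [pow_succ]
      linear_combination (4 * (n : ℝ) + 6) * ih - (Nat.factorial n : ℝ) * this
  have h := key n
  rw [Ring.descPochhammer_eq_factorial_smul_choose, nsmul_eq_mul, mul_assoc] at h
  exact mul_left_cancel₀ (by positivity) h

lemma hasSum_cf (y : ℝ) (hy : |y| < 1 / 4) :
    HasSum (fun n => cf n * y ^ n) (1 / ((1 - 4 * y) * Real.sqrt (1 - 4 * y))) := by
  have hy' := abs_lt.1 hy
  have h := (Real.one_add_rpow_hasFPowerSeriesOnBall_zero (a := -(3 / 2))).hasSum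
    (y := -4 * y) (by
      simp only [Metric.mem_eball, edist_zero_right]
      rw [← ofReal_norm, ENNReal.ofReal_lt_one, Real.norm_eq_abs, abs_lt]
      constructor <;> linarith)
  convert! h using 1
  · funext n
    rw [binomialSeries_apply, ← choose_eq n]
    rw [mul_assoc, ← mul_pow]
    simp
  · have hp : 0 < 1 - 4 * y := by linarith
    rw [show (1 : ℝ) + (0 + -4 * y) = 1 - 4 * y by ring, Real.rpow_neg hp.le,
      show (3 / 2 : ℝ) = 1 + 1 / 2 by norm_num, Real.rpow_add hp, Real.rpow_one,
      ← Real.sqrt_eq_rpow, one_div]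

/-- Derivative of the even term in `q`. -/
noncomputable def Dt (x₁ x₂ t : ℝ) (p : ℕ × ℕ) : ℝ :=
  cf p.1 * cf p.2 * t ^ (p.1 + p.2) / (x₁ ^ (2 * p.1 + 2) * x₂ ^ (2 * p.2 + 2))

lemma evenTerm_eq (x₁ x₂ t : ℝ) (p : ℕ × ℕ) :
    evenTerm t x₁ x₂ p = t / ((p.1 + p.2 + 1 : ℕ) : ℝ) * Dt x₁ x₂ t p := by
  unfold evenTerm Dt
  rw [fact_odd, fact_odd]
  have h1 : (Nat.factorial p.1 : ℝ) ≠ 0 := by positivity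
  have h2 : (Nat.factorial p.2 : ℝ) ≠ 0 := by positivity
  have h3 : ((p.1 + p.2 + 1 : ℕ) : ℝ) ≠ 0 := by positivity
  rw [div_mul_div_comm, div_div]
  rw [← mul_div_mul_right (t * _) _ (mul_ne_zero (pow_ne_zero 2 h1) (pow_ne_zero 2 h2))]
  congr 1 <;> ring

lemma oddTerm_eq (x₁ x₂ t : ℝ) (p : ℕ × ℕ) :
    oddTerm t x₁ x₂ p =
      t / ((p.1 + p.2 + 2 : ℕ) : ℝ) * (4 * t / (x₁ * x₂) * Dt x₁ x₂ t p) := by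
  unfold oddTerm Dt
  have e1 := fact_even p.1
  have e2 := fact_even p.2
  have h1 : (Nat.factorial (p.1 + 1) : ℝ) ≠ 0 := by positivity
  have h2 : (Nat.factorial (p.2 + 1) : ℝ) ≠ 0 := by positivity
  have en : t ^ ((p.1 + 1) + (p.2 + 1)) * ((p.1 + 1 : ℕ) : ℝ) * ((p.2 + 1 : ℕ) : ℝ) *
      (Nat.factorial (2 * (p.1 + 1)) : ℝ) * (Nat.factorial (2 * (p.2 + 1)) : ℝ)
      = t ^ ((p.1 + 1) + (p.2 + 1)) * (2 * cf p.1 * (Nat.factorial (p.1 + 1) : ℝ) ^ 2) *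
        (2 * cf p.2 * (Nat.factorial (p.2 + 1) : ℝ) ^ 2) := by
    rw [← e1, ← e2]; push_cast; ring
  rw [en, div_mul_div_comm, div_mul_div_comm, div_div,
    show p.1 + 1 + (p.2 + 1) = p.1 + p.2 + 2 by ring]
  rw [← mul_div_mul_right (t * _) _ (mul_ne_zero (pow_ne_zero 2 h1) (pow_ne_zero 2 h2))]
  congr 1 <;> ring

lemma hasDerivAt_evenTerm (x₁ x₂ t : ℝ) (p : ℕ × ℕ) :
    HasDerivAt (fun s => evenTerm s x₁ x₂ p) (Dt x₁ x₂ t p) t := by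
  have h3 : ((p.1 + p.2 + 1 : ℕ) : ℝ) ≠ 0 := by positivity
  have h := ((hasDerivAt_pow (p.1 + p.2 + 1) t).const_mul
    (cf p.1 * cf p.2 / (x₁ ^ (2 * p.1 + 2) * x₂ ^ (2 * p.2 + 2)))).div_const
      ((p.1 + p.2 + 1 : ℕ) : ℝ)
  convert! h using 1
  · funext s; rw [evenTerm_eq, Dt]; ring
  · rw [eq_div_iff h3, Dt, Nat.add_sub_cancel]; ring

lemma hasDerivAt_oddTerm (x₁ x₂ t : ℝ) (p : ℕ × ℕ) :
    HasDerivAt (fun s => oddTerm s x₁ x₂ p) (4 * t / (x₁ * x₂) * Dt x₁ x₂ t p) t := by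
  have h3 : ((p.1 + p.2 + 2 : ℕ) : ℝ) ≠ 0 := by positivity
  have h := ((hasDerivAt_pow (p.1 + p.2 + 2) t).const_mul
    (4 / (x₁ * x₂) * (cf p.1 * cf p.2 / (x₁ ^ (2 * p.1 + 2) * x₂ ^ (2 * p.2 + 2))))).div_const
      ((p.1 + p.2 + 2 : ℕ) : ℝ)
  convert! h using 1
  · funext s; rw [oddTerm_eq, Dt]; ring
  · rw [eq_div_iff h3, Dt, show p.1 + p.2 + 2 - 1 = p.1 + p.2 + 1 by omega]; ring

/-- One-variable factor of `Dt`. -/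
noncomputable def Ct (x t : ℝ) (n : ℕ) : ℝ := cf n * (t / x ^ 2) ^ n / x ^ 2

lemma hasSum_one (x t : ℝ) (hx : 0 < x) (ht : 4 * |t| < x ^ 2) :
    HasSum (Ct x t)
      (x / ((x ^ 2 - 4 * t) * Real.sqrt (x ^ 2 - 4 * t))) := by
  have hx2 : 0 < x ^ 2 := by positivity
  have h := (hasSum_cf (t / x ^ 2) (by
    rw [abs_div, abs_of_pos hx2, div_lt_iff₀ hx2]; linarith)).div_const (x ^ 2)
  convert! h using 1
  have hp : 0 < x ^ 2 - 4 * t := by linarith [le_abs_self t]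
  have hs : 0 < Real.sqrt (x ^ 2 - 4 * t) := Real.sqrt_pos.2 hp
  have e : 1 - 4 * (t / x ^ 2) = (x ^ 2 - 4 * t) / x ^ 2 := by field_simp
  rw [e, Real.sqrt_div' _ hx2.le, Real.sqrt_sq hx.le]
  field_simp

lemma hasSum_prod_mul (f g : ℕ → ℝ) (s t : ℝ) (hf : HasSum f s) (hg : HasSum g t) :
    HasSum (fun p : ℕ × ℕ => f p.1 * g p.2) (s * t) :=
  hf.mul hg (summable_mul_of_summable_norm hf.summable.norm hg.summable.norm)

lemma Dt_eq (x₁ x₂ t : ℝ) (p : ℕ × ℕ) :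
    Dt x₁ x₂ t p = Ct x₁ t p.1 * Ct x₂ t p.2 := by
  rw [Dt, Ct, Ct, div_pow, div_pow, ← pow_mul, ← pow_mul, pow_add, pow_add, pow_add]
  simp only [div_eq_mul_inv, mul_inv]
  ring

lemma hasSum_Dt (x₁ x₂ t : ℝ) (h1 : 0 < x₁) (h2 : 0 < x₂)
    (ht1 : 4 * |t| < x₁ ^ 2) (ht2 : 4 * |t| < x₂ ^ 2) :
    HasSum (Dt x₁ x₂ t)
      ((x₁ / ((x₁ ^ 2 - 4 * t) * Real.sqrt (x₁ ^ 2 - 4 * t))) *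
        (x₂ / ((x₂ ^ 2 - 4 * t) * Real.sqrt (x₂ ^ 2 - 4 * t)))) := by
  rw [funext (Dt_eq x₁ x₂ t)]
  exact hasSum_prod_mul (Ct x₁ t) (Ct x₂ t) _ _ (hasSum_one x₁ t h1 ht1) (hasSum_one x₂ t h2 ht2)

lemma Dt_nonneg (x₁ x₂ t : ℝ) (h1 : 0 < x₁) (h2 : 0 < x₂) (ht : 0 ≤ t) (p : ℕ × ℕ) :
    0 ≤ Dt x₁ x₂ t p := by
  have := cf_nonneg p.1
  have := cf_nonneg p.2
  unfold Dt; positivity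

lemma abs_Dt_le (x₁ x₂ t r : ℝ) (h1 : 0 < x₁) (h2 : 0 < x₂) (ht : |t| ≤ r) (p : ℕ × ℕ) :
    |Dt x₁ x₂ t p| ≤ Dt x₁ x₂ r p := by
  have a1 := cf_nonneg p.1
  have a2 := cf_nonneg p.2
  unfold Dt
  rw [abs_div, abs_mul, abs_pow, abs_of_nonneg (mul_nonneg a1 a2),
    abs_of_pos (show 0 < x₁ ^ (2 * p.1 + 2) * x₂ ^ (2 * p.2 + 2) by positivity)]
  gcongr

lemma hasDerivAt_W02 (x₁ x₂ t : ℝ) (hne : x₁ ≠ x₂)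
    (ht1 : 4 * t < x₁ ^ 2) (ht2 : 4 * t < x₂ ^ 2) :
    HasDerivAt (fun s => W02 s x₁ x₂)
      ((x₁ * x₂ + 4 * t) / ((x₁ ^ 2 - 4 * t) * Real.sqrt (x₁ ^ 2 - 4 * t) *
        ((x₂ ^ 2 - 4 * t) * Real.sqrt (x₂ ^ 2 - 4 * t)))) t := by
  have p1 : 0 < x₁ ^ 2 - 4 * t := by linarith
  have p2 : 0 < x₂ ^ 2 - 4 * t := by linarith
  have hl : ∀ c : ℝ, HasDerivAt (fun s : ℝ => c - 4 * s) (-4) t := fun c => by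
    simpa using ((hasDerivAt_id t).const_mul 4).const_sub c
  have d1 := (hl (x₁ ^ 2)).sqrt p1.ne'
  have d2 := (hl (x₂ ^ 2)).sqrt p2.ne'
  have s1 : 0 < Real.sqrt (x₁ ^ 2 - 4 * t) := Real.sqrt_pos.2 p1
  have s2 : 0 < Real.sqrt (x₂ ^ 2 - 4 * t) := Real.sqrt_pos.2 p2
  have q1 := Real.sq_sqrt p1.le
  have q2 := Real.sq_sqrt p2.le
  have hd : x₁ - x₂ ≠ 0 := sub_ne_zero.2 hne
  have h := ((hl (x₁ * x₂)).div (((d1.const_mul 2).mul d2).mul_const ((x₁ - x₂) ^ 2))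
    (by simp only [Pi.mul_apply]; positivity)).sub_const (1 / (2 * (x₁ - x₂) ^ 2))
  convert! h using 1
  simp only [Pi.mul_apply]
  set a := Real.sqrt (x₁ ^ 2 - 4 * t)
  set b := Real.sqrt (x₂ ^ 2 - 4 * t)
  rw [← q1, ← q2]
  field_simp
  have ea : x₁ ^ 2 = a ^ 2 + 4 * t := by linarith
  have eb : x₂ ^ 2 = b ^ 2 + 4 * t := by linarith
  rw [show b ^ 2 = x₂ ^ 2 - 4 * t by linarith, show a ^ 2 = x₁ ^ 2 - 4 * t by linarith]
  ring

/-- The genus-zero two-point series of stationary GW invariants of ℙ¹ sums to `W₀₂(x₁,x₂;q)`. -/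
theorem two_point_series_eq_W02 (q x₁ x₂ : ℝ) (hq : 0 < q)
    (h₁ : 2 * Real.sqrt q < x₁) (h₂ : 2 * Real.sqrt q < x₂) (hne : x₁ ≠ x₂) :
    Summable (evenTerm q x₁ x₂) ∧ Summable (oddTerm q x₁ x₂) ∧
      (∑' p : ℕ × ℕ, evenTerm q x₁ x₂ p) + (∑' p : ℕ × ℕ, oddTerm q x₁ x₂ p) =
        W02 q x₁ x₂ := by
  have hs : 0 < Real.sqrt q := Real.sqrt_pos.2 hq
  have hss : Real.sqrt q ^ 2 = q := Real.sq_sqrt hq.le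
  have p1 : 0 < x₁ := by linarith
  have p2 : 0 < x₂ := by linarith
  have b1 : q < x₁ ^ 2 / 4 := by nlinarith
  have b2 : q < x₂ ^ 2 / 4 := by nlinarith
  obtain ⟨r, hqr, hr⟩ := exists_between (lt_min b1 b2)
  have r1 : 4 * r < x₁ ^ 2 := by linarith [min_le_left (x₁ ^ 2 / 4) (x₂ ^ 2 / 4)]
  have r2 : 4 * r < x₂ ^ 2 := by linarith [min_le_right (x₁ ^ 2 / 4) (x₂ ^ 2 / 4)]
  have r0 : 0 < r := hq.trans hqr
  have hD : ∀ t, |t| ≤ r → HasSum (Dt x₁ x₂ t) _ := fun t ht =>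
    hasSum_Dt x₁ x₂ t p1 p2 (by linarith) (by linarith)
  have hDr := (hD r (abs_of_pos r0).le).summable
  have hDq := (hD q (by rw [abs_of_pos hq]; exact hqr.le)).summable
  have dn := Dt_nonneg x₁ x₂ q p1 p2 hq.le
  have hE : Summable (evenTerm q x₁ x₂) := by
    refine Summable.of_nonneg_of_le (fun p => ?_) (fun p => ?_) (hDq.mul_left q)
    · rw [evenTerm_eq]; have := dn p; positivity
    · rw [evenTerm_eq]
      refine mul_le_mul_of_nonneg_right (div_le_self hq.le ?_) (dn p)
      exact_mod_cast Nat.le_add_left 1 _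
  have hO : Summable (oddTerm q x₁ x₂) := by
    refine Summable.of_nonneg_of_le (fun p => ?_) (fun p => ?_)
      ((hDq.mul_left (4 * q / (x₁ * x₂))).mul_left q)
    · rw [oddTerm_eq]; have := dn p; positivity
    · rw [oddTerm_eq]
      have := dn p
      refine mul_le_mul_of_nonneg_right (div_le_self hq.le ?_) (by positivity)
      exact_mod_cast Nat.le_add_left 1 _
  refine ⟨hE, hO, ?_⟩
  rw [← hE.tsum_add hO]
  have z : ∀ p, evenTerm 0 x₁ x₂ p + oddTerm 0 x₁ x₂ p = 0 := fun p => by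
    rw [evenTerm_eq, oddTerm_eq]; simp
  have hF : ∀ t ∈ Set.Ioo (-r) r, HasDerivAt
      (fun s => ∑' p, (evenTerm s x₁ x₂ p + oddTerm s x₁ x₂ p))
      ((x₁ * x₂ + 4 * t) / ((x₁ ^ 2 - 4 * t) * Real.sqrt (x₁ ^ 2 - 4 * t) *
        ((x₂ ^ 2 - 4 * t) * Real.sqrt (x₂ ^ 2 - 4 * t)))) t := by
    intro t ht
    have h := hasDerivAt_tsum_of_isPreconnected
      (g := fun p s => evenTerm s x₁ x₂ p + oddTerm s x₁ x₂ p)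
      (g' := fun p s => Dt x₁ x₂ s p + 4 * s / (x₁ * x₂) * Dt x₁ x₂ s p)
      (u := fun p => Dt x₁ x₂ r p + 4 * r / (x₁ * x₂) * Dt x₁ x₂ r p)
      (hDr.add (hDr.mul_left _)) isOpen_Ioo isPreconnected_Ioo
      (fun p s _ => (hasDerivAt_evenTerm x₁ x₂ s p).add (hasDerivAt_oddTerm x₁ x₂ s p))
      (fun p s hs => by
        have hs' : |s| ≤ r := (abs_lt.2 hs).le
        have hb := abs_Dt_le x₁ x₂ s r p1 p2 hs' p
        refine (norm_add_le _ _).trans (add_le_add hb ?_)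
        rw [Real.norm_eq_abs, abs_mul, abs_div, abs_mul, abs_of_pos (mul_pos p1 p2),
          abs_of_pos (show (0 : ℝ) < 4 by norm_num)]
        gcongr)
      (y₀ := 0) ⟨by linarith, r0⟩ (by simp only [z]; exact summable_zero) ht
    convert! h using 1
    have hS := hD t (abs_lt.2 ht).le
    rw [(hS.add (hS.mul_left (4 * t / (x₁ * x₂)))).tsum_eq]
    field_simp
  have hW : ∀ t ∈ Set.Ioo (-r) r, HasDerivAt (fun s => W02 s x₁ x₂) _ t := fun t ht =>
    hasDerivAt_W02 x₁ x₂ t hne (by linarith [ht.2]) (by linarith [ht.2])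
  refine isOpen_Ioo.eqOn_of_deriv_eq isPreconnected_Ioo
    (f := fun s => ∑' p, (evenTerm s x₁ x₂ p + oddTerm s x₁ x₂ p))
    (g := fun s => W02 s x₁ x₂)
    (fun t ht => (hF t ht).differentiableAt.differentiableWithinAt)
    (fun t ht => (hW t ht).differentiableAt.differentiableWithinAt)
    (fun t ht => by rw [(hF t ht).deriv, (hW t ht).deriv])
    (x := 0) ⟨by linarith, r0⟩ ?_ (show q ∈ Set.Ioo (-r) r from ⟨by linarith, hqr⟩)
  simp only [z, tsum_zero]
  have hd : x₁ - x₂ ≠ 0 := sub_ne_zero.2 hne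
  simp only [W02, mul_zero, sub_zero, Real.sqrt_sq p1.le, Real.sqrt_sq p2.le]
  field_simp
  simp
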